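/- arXiv:1311.1779 — 11 statements merged into one kernel-verified Lean document; each statement's English description precedes it below -/
import Mathlib

section
/- Let L be a field containing F_q, let M/L be a field extension and x ∈ M. Let i, j be positive integers and r = gcd(i, j). Then the intermediate field generated over L by Tr_i(x) and Tr_j(x) equals the intermediate field generated over L by Tr_r(x); in particular, if gcd(i, j) = 1 then L(Tr_i(x), Tr_j(x)) = L(x). -/
/-- The trace polynomial `Tr_i(x) = x + x^q + ⋯ + x^{q^{i-1}}`. -/
def Tr {R : Type*} [CommRing R] (q i : ℕ) (x : R) : R :=
  ∑ j ∈ Finset.range i, x ^ q ^ j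

theorem Tr_add {M : Type*} [Field M] (p e q : ℕ) (hq : q = p ^ e) [ExpChar M p] (x : M) (a b : ℕ) :
    Tr q (a + b) x = Tr q a x + (Tr q b x) ^ q ^ a := by
  unfold Tr
  rw [Finset.sum_range_add]
  congr 1
  subst hq
  rw [← pow_mul, sum_pow_char_pow]
  refine Finset.sum_congr rfl fun k _ => ?_
  rw [pow_mul p e a, pow_add, mul_comm ((p ^ e) ^ a), pow_mul]

theorem Tr_gcd_mem {L M : Type*} [Field L] [Field M] [Algebra L M] (K : IntermediateField L M)
    (p e q : ℕ) (hq : q = p ^ e) [ExpChar M p] (x : M) (n : ℕ) :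
    ∀ a b : ℕ, a + b ≤ n → Tr q a x ∈ K → Tr q b x ∈ K → Tr q (Nat.gcd a b) x ∈ K := by
  induction n with
  | zero =>
    intro a b h ha hb
    obtain ⟨rfl, rfl⟩ : a = 0 ∧ b = 0 := by omega
    simpa using ha
  | succ n ih =>
    intro a b h ha hb
    rcases Nat.eq_zero_or_pos a with rfl | ha0
    · simpa using hb
    rcases Nat.eq_zero_or_pos b with rfl | hb0
    · simpa using ha
    rcases le_total a b with hab | hab
    · obtain ⟨c, rfl⟩ := Nat.exists_eq_add_of_le' hab
      rw [Tr_add p e q hq] at hb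
      have hc : Tr q c x ∈ K := by
        have := K.sub_mem hb (pow_mem ha (q ^ c))
        simpa using this
      have := ih a c (by omega) ha hc
      simpa using this
    · obtain ⟨c, rfl⟩ := Nat.exists_eq_add_of_le' hab
      rw [Tr_add p e q hq] at ha
      have hc : Tr q c x ∈ K := by
        have := K.sub_mem ha (pow_mem hb (q ^ c))
        simpa using this
      have := ih c b (by omega) hc hb
      simpa using this

theorem Tr_mul_mem {L M : Type*} [Field L] [Field M] [Algebra L M] (K : IntermediateField L M)
    (p e q : ℕ) (hq : q = p ^ e) [ExpChar M p] (x : M) (r : ℕ) (h : Tr q r x ∈ K) (m : ℕ) :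
    Tr q (r * m) x ∈ K := by
  induction m with
  | zero => simp [Tr]
  | succ m ih =>
    rw [Nat.mul_succ, Tr_add p e q hq]
    exact K.add_mem ih (pow_mem h _)

/-- For a field `L ⊇ F_q`, a field extension `M/L`, `x ∈ M` and positive
integers `i, j` with `r = gcd(i,j)`, we have `L(Tr_i(x), Tr_j(x)) = L(Tr_r(x))`;
in particular if `gcd(i,j) = 1` then `L(Tr_i(x), Tr_j(x)) = L(x)`. -/
theorem stmt_2 (p e q : ℕ) (hp : p.Prime) (he : 0 < e) (hq : q = p ^ e)
    (Fq : Type*) [Field Fq] [Fintype Fq] (hcard : Fintype.card Fq = q)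
    (L M : Type*) [Field L] [Field M] [Algebra Fq L] [Algebra L M]
    (x : M) (i j r : ℕ) (hi : 0 < i) (hj : 0 < j) (hr : r = Nat.gcd i j) :
    IntermediateField.adjoin L {Tr q i x, Tr q j x} = IntermediateField.adjoin L {Tr q r x}
    ∧ (Nat.gcd i j = 1 →
        IntermediateField.adjoin L {Tr q i x, Tr q j x} = IntermediateField.adjoin L {x}) := by
  have hF : CharP Fq p := by
    have := Fact.mk hp
    obtain ⟨p', hp'⟩ := CharP.exists Fq
    obtain ⟨n, hn, hc⟩ := FiniteField.card Fq p'
    have h2 : p' ∣ p ^ e := by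
      rw [← hq, ← hcard, hc]
      exact dvd_pow_self _ n.pos.ne'
    have h3 := (Nat.prime_dvd_prime_iff_eq hn hp).1 (hn.dvd_of_dvd_pow h2)
    exact h3 ▸ hp'
  have hL : CharP L p := charP_of_injective_algebraMap (algebraMap Fq L).injective p
  have hM : CharP M p := charP_of_injective_algebraMap (algebraMap L M).injective p
  have : ExpChar M p := ExpChar.prime hp
  have key : IntermediateField.adjoin L {Tr q i x, Tr q j x}
      = IntermediateField.adjoin L {Tr q r x} := by
    apply le_antisymm
    · rw [IntermediateField.adjoin_le_iff]
      have h0 := IntermediateField.mem_adjoin_simple_self L (Tr q r x)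
      obtain ⟨a, ha⟩ : r ∣ i := hr ▸ Nat.gcd_dvd_left i j
      obtain ⟨b, hb⟩ : r ∣ j := hr ▸ Nat.gcd_dvd_right i j
      rintro y (rfl | rfl)
      · rw [ha]
        exact Tr_mul_mem _ p e q hq x r h0 a
      · rw [hb]
        exact Tr_mul_mem _ p e q hq x r h0 b
    · rw [IntermediateField.adjoin_le_iff]
      rintro y rfl
      rw [hr]
      exact Tr_gcd_mem _ p e q hq x _ i j le_rfl
        (IntermediateField.subset_adjoin L _ (by simp))
        (IntermediateField.subset_adjoin L _ (by simp))
  refine ⟨key, fun h => ?_⟩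
  rw [key, hr, h]
  simp [Tr]
end

section
/- Let R be a commutative ring of characteristic p and q a power of the prime p. Let i, j, r be positive integers and a, b positive integers with a·i − b·j = r. Then for every x ∈ R, Σ_{α=0}^{a−1} Tr_i(x)^{q^{α·i}} − ( Σ_{β=0}^{b−1} Tr_j(x)^{q^{β·j}} )^{q^r} = Tr_r(x). -/
theorem Tr_pow_aux (p e q : ℕ) (hp : p.Prime) (hq : q = p ^ e)
    (R : Type*) [CommRing R] [CharP R p] (n m : ℕ) (x : R) :
    (Tr q n x) ^ q ^ m = ∑ k ∈ Finset.range n, x ^ q ^ (m + k) := by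
  haveI : Fact p.Prime := ⟨hp⟩
  unfold Tr
  rw [hq, ← pow_mul, sum_pow_char_pow]
  refine Finset.sum_congr rfl fun k _ => ?_
  rw [← pow_mul]
  congr 1
  rw [← pow_mul, ← pow_mul, ← pow_add]
  congr 1
  ring

theorem Tr_add_aux (p e q : ℕ) (hp : p.Prime) (hq : q = p ^ e)
    (R : Type*) [CommRing R] [CharP R p] (m n : ℕ) (x : R) :
    Tr q (m + n) x = Tr q m x + (Tr q n x) ^ q ^ m := by
  rw [Tr_pow_aux p e q hp hq]
  unfold Tr
  rw [Finset.sum_range_add]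

theorem Tr_mul_aux (p e q : ℕ) (hp : p.Prime) (hq : q = p ^ e)
    (R : Type*) [CommRing R] [CharP R p] (a i : ℕ) (x : R) :
    ∑ α ∈ Finset.range a, (Tr q i x) ^ q ^ (α * i) = Tr q (a * i) x := by
  induction a with
  | zero => simp [Tr]
  | succ n ih =>
    rw [Finset.sum_range_succ, ih, Nat.succ_mul, Tr_add_aux p e q hp hq]

/-- In a commutative ring of characteristic `p`, with `q` a power of `p`,
if `a·i − b·j = r` (all positive integers), then
`Σ_{α=0}^{a−1} Tr_i(x)^{q^{α·i}} − (Σ_{β=0}^{b−1} Tr_j(x)^{q^{β·j}})^{q^r} = Tr_r(x)`. -/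
theorem stmt_3 (p e q : ℕ) (hp : p.Prime) (he : 0 < e) (hq : q = p ^ e)
    (R : Type*) [CommRing R] [CharP R p]
    (i j r a b : ℕ) (hi : 0 < i) (hj : 0 < j) (hrpos : 0 < r)
    (ha : 0 < a) (hb : 0 < b) (hab : a * i = b * j + r) (x : R) :
    (∑ α ∈ Finset.range a, (Tr q i x) ^ q ^ (α * i))
      - (∑ β ∈ Finset.range b, (Tr q j x) ^ q ^ (β * j)) ^ q ^ r = Tr q r x := by
  rw [Tr_mul_aux p e q hp hq, Tr_mul_aux p e q hp hq, hab, add_comm,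
    Tr_add_aux p e q hp hq, add_sub_cancel_right]
end

section
/- Let L be a field of characteristic p, q a power of p, n ≥ 2 an integer, 1 ≤ k < n, and a, b nonnegative integers with a·k − b·(n−k) = 1. Let R, S ∈ L satisfy Tr_{n−k}(R) + Tr_k(S) = 1, and set u := Σ_{α=0}^{a−1} R^{q^{α·k}} + ( Σ_{β=0}^{b−1} S^{q^{β·(n−k)}} )^{q}. Then Tr_k(u) = R + b·1_L and Tr_{n−k}(u) = −S + a·1_L. -/
section helpers
variable {p e q : ℕ} {L : Type*} [Field L] [CharP L p]

theorem aux_sum (hp : p.Prime) (hq : q = p ^ e) {ι : Type*} (s : Finset ι) (f : ι → L) (j : ℕ) :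
    (∑ i ∈ s, f i) ^ q ^ j = ∑ i ∈ s, f i ^ q ^ j := by
  haveI := Fact.mk hp
  subst hq
  rw [← pow_mul]
  exact sum_pow_char_pow p (e * j) s f

theorem aux_add (hp : p.Prime) (hq : q = p ^ e) (x y : L) (j : ℕ) :
    (x + y) ^ q ^ j = x ^ q ^ j + y ^ q ^ j := by
  haveI := Fact.mk hp
  subst hq
  rw [← pow_mul]
  exact add_pow_char_pow x y p (e * j)

theorem Tr_add' (hp : p.Prime) (hq : q = p ^ e) (i : ℕ) (x y : L) :
    Tr q i (x + y) = Tr q i x + Tr q i y := by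
  simp only [Tr, aux_add hp hq, Finset.sum_add_distrib]

theorem Tr_sum' (hp : p.Prime) (hq : q = p ^ e) (i : ℕ) {ι : Type*} (s : Finset ι) (f : ι → L) :
    Tr q i (∑ t ∈ s, f t) = ∑ t ∈ s, Tr q i (f t) := by
  simp only [Tr, aux_sum hp hq]
  rw [Finset.sum_comm]

theorem Tr_pow' (hp : p.Prime) (hq : q = p ^ e) (i j : ℕ) (x : L) :
    Tr q i (x ^ q ^ j) = (Tr q i x) ^ q ^ j := by
  simp only [Tr, aux_sum hp hq]
  refine Finset.sum_congr rfl fun t _ => ?_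
  rw [← pow_mul, ← pow_mul, mul_comm]

theorem Tr_mul' (hp : p.Prime) (hq : q = p ^ e) (a k : ℕ) (x : L) :
    ∑ α ∈ Finset.range a, (Tr q k x) ^ q ^ (α * k) = Tr q (a * k) x := by
  induction a with
  | zero => simp [Tr]
  | succ a ih =>
    rw [Finset.sum_range_succ, ih, Nat.succ_mul]
    simp only [Tr, aux_sum hp hq]
    rw [Finset.sum_range_add]
    congr 1
    refine Finset.sum_congr rfl fun t _ => ?_
    rw [← pow_mul, ← pow_add, add_comm]

theorem Tr_succ' (hp : p.Prime) (hq : q = p ^ e) (i : ℕ) (x : L) :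
    Tr q (i + 1) x = x + (Tr q i x) ^ q := by
  have h := aux_sum hp hq (Finset.range i) (fun j => x ^ q ^ j) 1
  rw [pow_one] at h
  simp only [Tr]
  rw [h, Finset.sum_range_succ', add_comm]
  simp [← pow_mul, pow_succ]

end helpers

/-- With `a·k − b·(n−k) = 1` and `Tr_{n−k}(R) + Tr_k(S) = 1`, the element
`u := Σ_{α<a} R^{q^{αk}} + (Σ_{β<b} S^{q^{β(n−k)}})^q` satisfies
`Tr_k(u) = R + b` and `Tr_{n−k}(u) = −S + a`. -/
theorem stmt_4 (p e q n k a b : ℕ) (hp : p.Prime) (he : 0 < e) (hq : q = p ^ e)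
    (hn : 2 ≤ n) (hk1 : 1 ≤ k) (hkn : k < n) (hab : a * k = b * (n - k) + 1)
    (L : Type*) [Field L] [CharP L p]
    (R S : L) (hRS : Tr q (n - k) R + Tr q k S = 1)
    (u : L)
    (hu : u = (∑ α ∈ Finset.range a, R ^ q ^ (α * k))
              + (∑ β ∈ Finset.range b, S ^ q ^ (β * (n - k))) ^ q) :
    Tr q k u = R + (b : L) ∧ Tr q (n - k) u = -S + (a : L) := by
  have hq1 : ∀ (i : ℕ) (x : L), Tr q i (x ^ q) = (Tr q i x) ^ q := fun i x => by
    simpa using Tr_pow' hp hq i 1 x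
  have ha1 : ∀ x y : L, (x + y) ^ q = x ^ q + y ^ q := fun x y => by
    simpa using aux_add hp hq x y 1
  have hs1 : ∀ (c m : ℕ), (∑ β ∈ Finset.range c, (1 : L) ^ q ^ (β * m)) = (c : L) := by simp
  have hb : ((b : L)) ^ q = b := by
    have h := aux_sum hp hq (Finset.range b) (fun _ => (1 : L)) 1
    simpa using h
  generalize n - k = m at *
  subst hu
  constructor
  · rw [Tr_add' hp hq, Tr_sum' hp hq, hq1, Tr_sum' hp hq]
    simp only [Tr_pow' hp hq]
    rw [Tr_mul' hp hq, hab, Tr_succ' hp hq, ← Tr_mul' hp hq b m R, add_assoc, ← ha1,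
      ← Finset.sum_add_distrib]
    simp only [← aux_add hp hq, hRS]
    rw [hs1, hb]
  · rw [Tr_add' hp hq, Tr_sum' hp hq, hq1, Tr_sum' hp hq]
    simp only [Tr_pow' hp hq]
    rw [Tr_mul' hp hq b m S]
    have h1 := Tr_succ' hp hq (b * m) S
    rw [← hab, ← Tr_mul' hp hq a k S] at h1
    have h2 := hs1 a k
    simp only [← hRS, aux_add hp hq, Finset.sum_add_distrib] at h2
    linear_combination h2 - h1
end

section
/- Let F be a field of characteristic p, q a power of p, n ≥ 2, 1 ≤ k < n, and a, b nonnegative integers with a·k − b·(n−k) = 1. Let M/F be a field extension and R, S ∈ M satisfy Tr_{n−k}(R) + Tr_k(S) = 1. Set u := Σ_{α=0}^{a−1} R^{q^{α·k}} + ( Σ_{β=0}^{b−1} S^{q^{β·(n−k)}} )^{q}. Then the intermediate field F(R, S) of M/F equals F(u). -/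
open Polynomial in
theorem geom_aux (a k : ℕ) : (∑ j ∈ Finset.range k, (X : ℤ[X]) ^ j) *
    (∑ α ∈ Finset.range a, (X : ℤ[X]) ^ (α * k)) = ∑ j ∈ Finset.range (a * k), (X : ℤ[X]) ^ j := by
  induction a with
  | zero => simp
  | succ a ih =>
    rw [Finset.sum_range_succ, mul_add, ih, Nat.succ_mul, Finset.sum_range_add, Finset.sum_mul]
    congr 1
    refine Finset.sum_congr rfl fun j _ => ?_
    rw [← pow_add, add_comm]

/-- With `a·k − b·(n−k) = 1` and `Tr_{n−k}(R) + Tr_k(S) = 1` for elements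
`R, S` of an extension `M` of `F`, the element
`u := Σ_{α<a} R^{q^{αk}} + (Σ_{β<b} S^{q^{β(n−k)}})^q` satisfies `F(R,S) = F(u)`. -/
theorem stmt_5 (p e q n k a b : ℕ) (hp : p.Prime) (he : 0 < e) (hq : q = p ^ e)
    (hn : 2 ≤ n) (hk1 : 1 ≤ k) (hkn : k < n) (hab : a * k = b * (n - k) + 1)
    (F M : Type*) [Field F] [CharP F p] [Field M] [Algebra F M]
    (R S : M) (hRS : Tr q (n - k) R + Tr q k S = 1)
    (u : M)
    (hu : u = (∑ α ∈ Finset.range a, R ^ q ^ (α * k))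
              + (∑ β ∈ Finset.range b, S ^ q ^ (β * (n - k))) ^ q) :
    IntermediateField.adjoin F {R, S} = IntermediateField.adjoin F {u} := by
  classical
  haveI : Fact p.Prime := ⟨hp⟩
  haveI : CharP M p := charP_of_injective_algebraMap (algebraMap F M).injective p
  haveI : ExpChar M p := ExpChar.prime hp
  obtain ⟨m, hm⟩ : ∃ m, m = n - k := ⟨_, rfl⟩
  rw [← hm] at hab hRS hu
  let φ : Module.End ℤ M := (iterateFrobenius M p e).toAddMonoidHom.toIntLinearMap
  have hφ : ∀ x, φ x = x ^ q := fun x => by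
    rw [hq]; exact iterateFrobenius_def p e x
  have hφj : ∀ j x, (φ ^ j) x = x ^ q ^ j := by
    intro j
    induction j with
    | zero => intro x; simp
    | succ j ih => intro x; rw [pow_succ, Module.End.mul_apply, hφ, ih, ← pow_mul, pow_succ']
  let L : Polynomial ℤ →ₐ[ℤ] Module.End ℤ M := Polynomial.aeval φ
  have hX : L Polynomial.X = φ := Polynomial.aeval_X φ
  have hL : ∀ (N : ℕ) (f : ℕ → ℕ) (x : M),
      L (∑ j ∈ Finset.range N, Polynomial.X ^ f j) x = ∑ j ∈ Finset.range N, x ^ q ^ f j := by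
    intro N f x
    rw [map_sum, LinearMap.sum_apply]
    refine Finset.sum_congr rfl fun j _ => ?_
    rw [map_pow, hX, hφj]
  have hmul : ∀ P Q x, L (P * Q) x = L P (L Q x) := fun P Q x => by
    rw [map_mul, Module.End.mul_apply]
  let T : ℕ → Polynomial ℤ := fun i => ∑ j ∈ Finset.range i, Polynomial.X ^ j
  let A : Polynomial ℤ := ∑ α ∈ Finset.range a, Polynomial.X ^ (α * k)
  let B : Polynomial ℤ := ∑ β ∈ Finset.range b, Polynomial.X ^ (β * m)
  have hT : ∀ i x, L (T i) x = Tr q i x := fun i x => hL i (fun j => j) x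
  have hA : T k * A = T (a * k) := geom_aux a k
  have hB : T m * B = T (b * m) := geom_aux b m
  have hAB : T (a * k) = 1 + Polynomial.X * T (b * m) := by
    simp only [T]
    rw [hab, Finset.sum_range_succ', Finset.mul_sum, add_comm, pow_zero]
    congr 1
    exact Finset.sum_congr rfl fun j _ => pow_succ' _ _
  have hu' : u = L A R + L (Polynomial.X * B) S := by
    rw [hu, hmul, hX, hφ, hL b (fun β => β * m), hL a (fun α => α * k)]
  have hS : L (T k) S = 1 - L (T m) R := by rw [hT, hT, ← hRS]; ring
  have hR : L (T m) R = 1 - L (T k) S := by rw [hT, hT, ← hRS]; ring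
  have hA1 : L A 1 = a := by rw [hL a (fun α => α * k)]; simp
  have hB1 : L (Polynomial.X * B) 1 = b := by
    rw [hmul, hX, hL b (fun β => β * m)]
    simp only [one_pow, Finset.sum_const, Finset.card_range]
    rw [map_nsmul, hφ]; simp
  have e1 : Tr q k u = R + b := by
    rw [← hT, hu', map_add, ← hmul, ← hmul, hA, mul_comm (T k), hmul _ (T k), hS, map_sub, hB1,
      ← hmul, mul_assoc, mul_comm B, hB, hAB, map_add, LinearMap.add_apply, map_one,
      Module.End.one_apply]
    ring
  have e2 : Tr q m u = a - S := by
    rw [← hT, hu', map_add, ← hmul, ← hmul, mul_comm _ A, hmul _ (T m), hR, map_sub, hA1,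
      ← hmul, mul_comm A, hA, mul_left_comm, hB, hAB, map_add, LinearMap.add_apply, map_one,
      Module.End.one_apply]
    ring
  apply le_antisymm
  · rw [IntermediateField.adjoin_le_iff]
    have hmem : u ∈ IntermediateField.adjoin F {u} :=
      IntermediateField.mem_adjoin_simple_self F u
    have hTr : ∀ i, Tr q i u ∈ IntermediateField.adjoin F {u} := fun i =>
      sum_mem fun j _ => pow_mem hmem _
    rintro x (rfl | rfl)
    · have : x = Tr q k u - b := by rw [e1]; ring
      rw [this]; exact sub_mem (hTr _) (natCast_mem _ _)
    · have : x = a - Tr q m u := by rw [e2]; ring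
      rw [this]; exact sub_mem (natCast_mem _ _) (hTr _)
  · rw [IntermediateField.adjoin_le_iff, Set.singleton_subset_iff, hu]
    have h1 : R ∈ IntermediateField.adjoin F {R, S} :=
      IntermediateField.subset_adjoin F _ (by simp)
    have h2 : S ∈ IntermediateField.adjoin F {R, S} :=
      IntermediateField.subset_adjoin F _ (by simp)
    exact add_mem (sum_mem fun j _ => pow_mem h1 _) (pow_mem (sum_mem fun j _ => pow_mem h2 _) _)
end

section
/- Let L be a field of characteristic p, q a power of p, n ≥ 2, 1 ≤ k < n, and a, b nonnegative integers with a·k − b·(n−k) = 1. Suppose x, y ∈ L are both nonzero and satisfy Σ_{i=0}^{n−k−1} y^{q^i} / x^{q^{k+i}} + Σ_{j=0}^{k−1} y^{q^{n−k+j}} / x^{q^j} = 1. Set R := y / x^{q^k}, S := y^{q^{n−k}} / x and u := Σ_{α=0}^{a−1} R^{q^{α·k}} + ( Σ_{β=0}^{b−1} S^{q^{β·(n−k)}} )^{q}. Then Tr_k(u) ≠ b, Tr_k(u)^{q^{n−k}} ≠ b, and y^{q^n − 1} = −(Tr_{n−k}(u)^{q^k} − a)/(Tr_k(u) − b) and x^{q^n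 − 1} = −(Tr_{n−k}(u) − a)/(Tr_k(u)^{q^{n−k}} − b). -/
def AA {R : Type*} [CommRing R] (q a k : ℕ) (z : R) : R :=
  ∑ α ∈ Finset.range a, z ^ q ^ (α * k)

section helpers
variable {L : Type*} [Field L]

lemma AA_Tr (q a k : ℕ) (hF : ∀ j, ∃ f : L →+* L, ∀ z, f z = z ^ q ^ j) (z : L) :
    AA q a k (Tr q k z) = Tr q (a * k) z := by
  induction a with
  | zero => simp [AA, Tr]
  | succ a ih =>
    have h1 : AA q (a+1) k (Tr q k z) = AA q a k (Tr q k z) + (Tr q k z) ^ q ^ (a * k) := by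
      simp [AA, Finset.sum_range_succ]
    rw [h1, ih, add_mul, one_mul]
    obtain ⟨f, hf⟩ := hF (a * k)
    unfold Tr
    rw [Finset.sum_range_add, ← hf, map_sum]
    congr 1
    refine Finset.sum_congr rfl fun j _ => ?_
    rw [hf, ← pow_mul, ← pow_add, add_comm]

lemma Tr_AA (q a k m : ℕ) (hF : ∀ j, ∃ f : L →+* L, ∀ z, f z = z ^ q ^ j) (z : L) :
    Tr q m (AA q a k z) = AA q a k (Tr q m z) := by
  unfold Tr AA
  have h1 : ∀ j, (∑ α ∈ Finset.range a, z ^ q ^ (α * k)) ^ q ^ j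
      = ∑ α ∈ Finset.range a, z ^ q ^ (α * k + j) := by
    intro j
    obtain ⟨f, hf⟩ := hF j
    rw [← hf, map_sum]
    refine Finset.sum_congr rfl fun α _ => ?_
    rw [hf, ← pow_mul, ← pow_add]
  have h2 : ∀ j, (∑ α ∈ Finset.range m, z ^ q ^ α) ^ q ^ j
      = ∑ α ∈ Finset.range m, z ^ q ^ (j + α) := by
    intro j
    obtain ⟨f, hf⟩ := hF j
    rw [← hf, map_sum]
    refine Finset.sum_congr rfl fun α _ => ?_
    rw [hf, ← pow_mul, ← pow_add, add_comm]
  simp only [h1, h2]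
  rw [Finset.sum_comm]

lemma Tr_add_s7 (q m : ℕ) (hF : ∀ j, ∃ f : L →+* L, ∀ z, f z = z ^ q ^ j) (z w : L) :
    Tr q m (z + w) = Tr q m z + Tr q m w := by
  unfold Tr
  rw [← Finset.sum_add_distrib]
  refine Finset.sum_congr rfl fun j _ => ?_
  obtain ⟨f, hf⟩ := hF j
  rw [← hf, map_add, hf, hf]

lemma Tr_pow (q m : ℕ) (hF : ∀ j, ∃ f : L →+* L, ∀ z, f z = z ^ q ^ j) (z : L) :
    Tr q m (z ^ q) = Tr q m z ^ q := by
  unfold Tr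
  obtain ⟨f, hf⟩ := hF 1
  rw [pow_one] at hf
  rw [← hf, ← hf, map_sum]
  simp only [map_pow]

lemma Tr_succ (q m : ℕ) (hF : ∀ j, ∃ f : L →+* L, ∀ z, f z = z ^ q ^ j) (z : L) :
    Tr q (m + 1) z = z + Tr q m z ^ q := by
  rw [← Tr_pow q m hF]
  unfold Tr
  rw [Finset.sum_range_succ', add_comm]
  simp [← pow_mul, pow_succ']

lemma AA_one_sub (q a k : ℕ) (hF : ∀ j, ∃ f : L →+* L, ∀ z, f z = z ^ q ^ j) (z : L) :
    AA q a k (1 - z) = a - AA q a k z := by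
  unfold AA
  have : ∀ j, (1 - z) ^ q ^ j = 1 - z ^ q ^ j := by
    intro j
    obtain ⟨f, hf⟩ := hF j
    rw [← hf, map_sub, map_one, hf]
  simp [this]

end helpers

/-- For nonzero `x, y` satisfying the defining equation of the tower, with
`R := y/x^{q^k}`, `S := y^{q^{n−k}}/x` and
`u := Σ_{α<a} R^{q^{αk}} + (Σ_{β<b} S^{q^{β(n−k)}})^q`, one has `Tr_k(u) ≠ b`,
`Tr_k(u)^{q^{n−k}} ≠ b`, `y^{q^n−1} = −(Tr_{n−k}(u)^{q^k} − a)/(Tr_k(u) − b)` and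
`x^{q^n−1} = −(Tr_{n−k}(u) − a)/(Tr_k(u)^{q^{n−k}} − b)`. -/
theorem stmt_7 (p e q n k a b : ℕ) (hp : p.Prime) (he : 0 < e) (hq : q = p ^ e)
    (hn : 2 ≤ n) (hk1 : 1 ≤ k) (hkn : k < n) (hab : a * k = b * (n - k) + 1)
    (L : Type*) [Field L] [CharP L p]
    (x y : L) (hx : x ≠ 0) (hy : y ≠ 0)
    (heq : (∑ i ∈ Finset.range (n - k), y ^ q ^ i / x ^ q ^ (k + i))
          + (∑ j ∈ Finset.range k, y ^ q ^ (n - k + j) / x ^ q ^ j) = 1)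
    (R S u : L) (hR : R = y / x ^ q ^ k) (hS : S = y ^ q ^ (n - k) / x)
    (hu : u = (∑ α ∈ Finset.range a, R ^ q ^ (α * k))
              + (∑ β ∈ Finset.range b, S ^ q ^ (β * (n - k))) ^ q) :
    Tr q k u ≠ (b : L) ∧ (Tr q k u) ^ q ^ (n - k) ≠ (b : L) ∧
    y ^ (q ^ n - 1) = -(((Tr q (n - k) u) ^ q ^ k - (a : L)) / (Tr q k u - (b : L))) ∧
    x ^ (q ^ n - 1) = -((Tr q (n - k) u - (a : L)) / ((Tr q k u) ^ q ^ (n - k) - (b : L))) := by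
  have hF : ∀ j, ∃ f : L →+* L, ∀ z, f z = z ^ q ^ j := by
    intro j
    haveI : Fact p.Prime := ⟨hp⟩
    refine ⟨iterateFrobenius L p (e * j), fun z => ?_⟩
    rw [iterateFrobenius_def, hq, pow_mul]
  obtain ⟨m, rfl⟩ : ∃ m, n = k + m := ⟨n - k, by omega⟩
  simp only [Nat.add_sub_cancel_left] at *
  have hR0 : R ≠ 0 := by rw [hR]; positivity
  have h1 : Tr q m R + Tr q k S = 1 := by
    rw [← heq, hR, hS]
    unfold Tr
    simp only [div_pow, ← pow_mul, ← pow_add]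
  have hu' : u = AA q a k R + (AA q b m S) ^ q := hu
  obtain ⟨f1, hf1⟩ := hF 1
  rw [pow_one] at hf1
  have hk : Tr q k u = R + b := by
    rw [hu', Tr_add_s7 q k hF, Tr_pow q k hF, Tr_AA q a k k hF, Tr_AA q b m k hF, AA_Tr q a k hF,
      eq_sub_of_add_eq' h1, AA_one_sub q b m hF, AA_Tr q b m hF, hab, Tr_succ q _ hF,
      ← hf1, ← hf1, map_sub, map_natCast]
    ring
  have hm : Tr q m u = a - S := by
    have h3 := Tr_succ q (b * m) hF S
    rw [hu', Tr_add_s7 q m hF, Tr_pow q m hF, Tr_AA q a k m hF, Tr_AA q b m m hF, AA_Tr q b m hF,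
      eq_sub_of_add_eq h1, AA_one_sub q a k hF, AA_Tr q a k hF, hab, h3]
    ring
  obtain ⟨f, hf⟩ := hF k
  obtain ⟨g, hg⟩ := hF m
  have hkm : Tr q k u ^ q ^ m = R ^ q ^ m + b := by
    rw [hk, ← hg, map_add, map_natCast, hg]
  have hmk : Tr q m u ^ q ^ k = a - S ^ q ^ k := by
    rw [hm, ← hf, map_sub, map_natCast, hf]
  have hRm : R ^ q ^ m ≠ 0 := pow_ne_zero _ hR0
  have hpos : 1 ≤ q ^ (k + m) := Nat.one_le_pow _ _ (by rw [hq]; exact pow_pos hp.pos _)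
  refine ⟨by rw [hk]; simpa using hR0, by rw [hkm]; simpa using hRm, ?_, ?_⟩
  · have e1 : S ^ q ^ k = y ^ q ^ (k + m) / x ^ q ^ k := by
      rw [hS, div_pow, ← pow_mul, ← pow_add, add_comm m k]
    rw [hmk, hk, add_sub_cancel_right, sub_sub_cancel_left, neg_div, neg_neg, e1, hR,
      pow_sub₀ y hy hpos]
    field_simp
  · have e1 : R ^ q ^ m = y ^ q ^ m / x ^ q ^ (k + m) := by
      rw [hR, div_pow, ← pow_mul, ← pow_add]
    rw [hkm, hm, add_sub_cancel_right, sub_sub_cancel_left, neg_div, neg_neg, e1, hS,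
      pow_sub₀ x hx hpos]
    field_simp
end

section
/- Let M be a field of characteristic p, q a power of p, n ≥ 2 and 1 ≤ k < n. Let z, t ∈ M satisfy Tr_{n−k}(t)^{q^k} = z · Tr_k(t). Then w := Tr_k(t) satisfies Σ_{i=k}^{n−1} w^{q^i} = Σ_{i=0}^{k−1} z^{q^i} · w^{q^i}; that is, Tr_k(t) is a root of the polynomial (zf)^{ad}(T) = −(T^{q^{n−1}} + ⋯ + T^{q^k}) + z^{q^{k−1}} T^{q^{k−1}} + ⋯ + z^q T^q + z·T. -/
/-- If `Tr_{n−k}(t)^{q^k} = z·Tr_k(t)`, then `w := Tr_k(t)` satisfies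
`Σ_{i=k}^{n−1} w^{q^i} = Σ_{i=0}^{k−1} z^{q^i}·w^{q^i}`, i.e. `Tr_k(t)` is a root of the
adjoint polynomial `(zf)^{ad}`. -/
theorem stmt_8 (p e q n k : ℕ) (hp : p.Prime) (he : 0 < e) (hq : q = p ^ e)
    (hn : 2 ≤ n) (hk1 : 1 ≤ k) (hkn : k < n)
    (M : Type*) [Field M] [CharP M p]
    (z t : M) (ht : (Tr q (n - k) t) ^ q ^ k = z * Tr q k t) :
    ∑ i ∈ Finset.Ico k n, (Tr q k t) ^ q ^ i
      = ∑ i ∈ Finset.range k, z ^ q ^ i * (Tr q k t) ^ q ^ i := by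
  haveI : Fact p.Prime := ⟨hp⟩
  have key : ∀ (m i : ℕ), (Tr q m t) ^ q ^ i = ∑ j ∈ Finset.range m, t ^ q ^ (j + i) := by
    intro m i
    unfold Tr
    have h : q ^ i = p ^ (e * i) := by rw [hq, pow_mul]
    rw [h, sum_pow_char_pow, ← h]
    exact Finset.sum_congr rfl fun j _ => by rw [← pow_mul, ← pow_add]
  have hR : ∀ i ∈ Finset.range k, z ^ q ^ i * (Tr q k t) ^ q ^ i
      = ∑ j ∈ Finset.range (n - k), t ^ q ^ (j + (k + i)) := by
    intro i _
    rw [← mul_pow, ← ht, ← pow_mul, ← pow_add, key]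
  rw [Finset.sum_congr rfl hR, Finset.sum_Ico_eq_sum_range, Finset.sum_comm]
  refine Finset.sum_congr rfl fun i _ => ?_
  rw [key]
  refine Finset.sum_congr rfl fun j _ => ?_
  congr 2
  omega
end

section
/- Let R be a commutative ring of characteristic p and q a power of the prime p. Let i, j be positive integers with gcd(i, j) = 1. If t ∈ R satisfies Tr_i(t) = 0 and Tr_j(t) = 0, then t = 0. -/
theorem Tr_gcd_aux (p e q : ℕ) (hp : p.Prime) (hq : q = p ^ e)
    (R : Type*) [CommRing R] [CharP R p] (t : R) :
    ∀ n i j : ℕ, i + j ≤ n → Tr q i t = 0 → Tr q j t = 0 → Tr q (Nat.gcd i j) t = 0 := by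
  have : Fact p.Prime := ⟨hp⟩
  have key : ∀ a b : ℕ, Tr q (a + b) t = Tr q a t + (Tr q b t) ^ q ^ a := by
    intro a b
    unfold Tr
    rw [Finset.sum_range_add, hq, ← pow_mul, sum_pow_char_pow]
    congr 1
    refine Finset.sum_congr rfl fun x _ => ?_
    rw [← pow_mul t, ← pow_mul, ← pow_mul p e x, ← pow_add, mul_add, add_comm (e * a)]
  have hq0 : ∀ a, q ^ a ≠ 0 := fun a => by
    rw [hq]; exact pow_ne_zero _ (pow_ne_zero _ hp.ne_zero)
  have step : ∀ a b : ℕ, Tr q (a + b) t = 0 → Tr q b t = 0 → Tr q a t = 0 := by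
    intro a b h1 h2
    rw [key, h2, zero_pow (hq0 a), add_zero] at h1
    exact h1
  intro n
  induction n with
  | zero =>
    intro i j h h1 h2
    obtain rfl : i = 0 := by omega
    simpa using h2
  | succ n ih =>
    intro i j h h1 h2
    rcases Nat.eq_zero_or_pos i with rfl | hi
    · simpa using h2
    rcases Nat.eq_zero_or_pos j with rfl | hj
    · simpa using h1
    rcases le_total i j with hij | hij
    · obtain ⟨d, rfl⟩ := Nat.exists_eq_add_of_le' hij
      have := ih i d (by omega) h1 (step d i h2 h1)
      simpa using this
    · obtain ⟨d, rfl⟩ := Nat.exists_eq_add_of_le' hij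
      have := ih d j (by omega) (step d j h1 h2) h2
      simpa using this

/-- In a commutative ring of characteristic `p`, with `q` a power of `p`
and `gcd(i, j) = 1`, if `Tr_i(t) = 0` and `Tr_j(t) = 0` then `t = 0`. -/
theorem stmt_9 (p e q : ℕ) (hp : p.Prime) (he : 0 < e) (hq : q = p ^ e)
    (R : Type*) [CommRing R] [CharP R p]
    (i j : ℕ) (hi : 0 < i) (hj : 0 < j) (hgcd : Nat.gcd i j = 1)
    (t : R) (hti : Tr q i t = 0) (htj : Tr q j t = 0) :
    t = 0 := by
  have h := Tr_gcd_aux p e q hp hq R t (i + j) i j le_rfl hti htj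
  rw [hgcd] at h
  simpa [Tr] using h
end

section
/- Let q be a prime power, n ≥ 2, 1 ≤ k < n with gcd(k, n−k) = 1. Let K = F_{q^n}(z) be the rational function field over F_{q^n} and Ω an algebraic closure of K. Define g(T) = Tr_{n−k}(T)^{q^k} − z · Tr_k(T) and h(T) = −(T^{q^{n−1}} + ⋯ + T^{q^k}) + z^{q^{k−1}} T^{q^{k−1}} + ⋯ + z^q T^q + z·T, both in K[T]. Then the map t ↦ Tr_k(t) is a bijection from the set of roots of g in Ω onto the set of roots of h in Ω. -/
open Polynomial in
lemma aux_copX (a m : ℕ) (ha : 0 < a) :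
    IsCoprime (∑ j ∈ Finset.range a, (X : ℤ[X]) ^ j) (X ^ m) := by
  apply IsCoprime.pow_right
  obtain ⟨b, rfl⟩ : ∃ b, a = b + 1 := ⟨a - 1, by omega⟩
  rw [Finset.sum_range_succ']
  refine ⟨1, -∑ j ∈ Finset.range b, (X : ℤ[X]) ^ j, ?_⟩
  simp only [pow_succ, ← Finset.sum_mul]
  ring

open Polynomial in
lemma aux_cop : ∀ (N a b : ℕ), a + b ≤ N → Nat.Coprime a b →
    IsCoprime (∑ j ∈ Finset.range a, (X : ℤ[X]) ^ j) (∑ j ∈ Finset.range b, (X : ℤ[X]) ^ j) := by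
  intro N
  induction N with
  | zero =>
    intro a b h hc
    obtain rfl : a = 0 := by omega
    obtain rfl : b = 0 := by omega
    simp at hc
  | succ N ih =>
    have key : ∀ a b : ℕ, a ≤ b → a + b ≤ N + 1 → Nat.Coprime a b →
        IsCoprime (∑ j ∈ Finset.range a, (X : ℤ[X]) ^ j)
          (∑ j ∈ Finset.range b, (X : ℤ[X]) ^ j) := by
      intro a b hab h hc
      rcases Nat.eq_zero_or_pos a with rfl | ha
      · have : b = 1 := by simpa using hc
        subst this
        simpa using isCoprime_one_right
      · obtain ⟨c, rfl⟩ := Nat.exists_eq_add_of_le hab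
        have h1 := ih a c (by omega) (by simpa using hc)
        rw [Finset.sum_range_add]
        simp only [pow_add, ← Finset.mul_sum]
        have h2 := (aux_copX a a ha).mul_right h1
        obtain ⟨u, v, huv⟩ := h2
        exact ⟨u - v, v, by rw [← huv]; ring⟩
    intro a b h hc
    rcases le_total a b with hab | hab
    · exact key a b hab h hc
    · exact (key b a hab (by omega) hc.symm).symm

/-- Over `K = F_{q^n}(z)` with algebraic closure `Ω`, the map
`t ↦ Tr_k(t)` is a bijection from the roots of `g(T) = Tr_{n−k}(T)^{q^k} − z·Tr_k(T)` in `Ω`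
onto the roots of `h(T) = −(T^{q^{n−1}} + ⋯ + T^{q^k}) + z^{q^{k−1}}T^{q^{k−1}} + ⋯ + z·T`
in `Ω`. -/
theorem stmt_10 (p e q n k : ℕ) (hp : p.Prime) (he : 0 < e) (hq : q = p ^ e)
    (hn : 2 ≤ n) (hk1 : 1 ≤ k) (hkn : k < n) (hgcd : Nat.gcd k (n - k) = 1)
    (F : Type*) [Field F] [Fintype F] (hF : Fintype.card F = q ^ n)
    (Ω : Type*) [Field Ω] [Algebra (RatFunc F) Ω] [IsAlgClosure (RatFunc F) Ω]
    (z : Ω) (hz : z = algebraMap (RatFunc F) Ω RatFunc.X) :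
    Set.BijOn (fun t => Tr q k t)
      {t : Ω | (Tr q (n - k) t) ^ q ^ k = z * Tr q k t}
      {w : Ω | ∑ i ∈ Finset.Ico k n, w ^ q ^ i
               = ∑ i ∈ Finset.range k, z ^ q ^ i * w ^ q ^ i} := by
  have : Fact p.Prime := ⟨hp⟩
  have : CharP F p := by
    have h2 : Fintype.card F = p ^ (e * n) := by rw [hF, hq, pow_mul]
    obtain ⟨c, hc⟩ := CharP.exists F
    obtain ⟨m, hcp, hm⟩ := FiniteField.card F c
    have hdvd : c ∣ p ^ (e * n) := by
      rw [← h2, hm]; exact dvd_pow_self _ m.ne_zero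
    have := (Nat.prime_dvd_prime_iff_eq hcp hp).1 (hcp.dvd_of_dvd_pow hdvd)
    exact this ▸ hc
  have : CharP (RatFunc F) p := charP_of_injective_algebraMap (algebraMap F (RatFunc F)).injective p
  have : CharP Ω p := charP_of_injective_algebraMap (algebraMap (RatFunc F) Ω).injective p
  have : ExpChar Ω p := ExpChar.prime hp
  let φ : Module.End ℤ Ω := (iterateFrobenius Ω p e).toAddMonoidHom.toIntLinearMap
  have hφ : ∀ x, φ x = x ^ q := by
    intro x; rw [hq]; rfl
  have hφj : ∀ (j : ℕ) (x : Ω), (φ ^ j) x = x ^ q ^ j := by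
    intro j
    induction j with
    | zero => intro x; simp
    | succ j ih => intro x; rw [pow_succ, Module.End.mul_apply, ih, hφ, ← pow_mul, pow_succ']
  let E : Polynomial ℤ →ₐ[ℤ] Module.End ℤ Ω := Polynomial.aeval φ
  let S : ℕ → Polynomial ℤ := fun a => ∑ j ∈ Finset.range a, Polynomial.X ^ j
  have hS : ∀ a x, E (S a) x = Tr q a x := by
    intro a x
    simp [E, S, Tr, hφj]
  let P : Polynomial ℤ := S (n - k) * Polynomial.X ^ k
  have hP1 : ∀ x, E P x = (Tr q (n - k) x) ^ q ^ k := by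
    intro x
    rw [← hS, ← hφj]
    simp only [P]
    rw [mul_comm, map_mul, Module.End.mul_apply]
    simp [E]
  have hP2 : ∀ x, E P x = ∑ i ∈ Finset.Ico k n, x ^ q ^ i := by
    intro x
    simp only [P, S, Finset.sum_mul, ← pow_add]
    rw [Finset.sum_Ico_eq_sum_range]
    simp [E, hφj, add_comm]
  have hcop : IsCoprime (S k) P :=
    (aux_cop _ k (n - k) le_rfl hgcd).mul_right (aux_copX k k hk1)
  have hR : ∀ x, ∑ i ∈ Finset.range k, z ^ q ^ i * x ^ q ^ i = E (S k) (z * x) := by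
    intro x
    rw [hS]
    simp [Tr, mul_pow]
  have hcomm : ∀ (A B : Polynomial ℤ) x, E A (E B x) = E B (E A x) := by
    intro A B x
    rw [← Module.End.mul_apply, ← Module.End.mul_apply, ← map_mul, ← map_mul, mul_comm]
  obtain ⟨A, B, hAB⟩ := hcop
  have hone : ∀ x, E A (E (S k) x) + E B (E P x) = x := by
    intro x
    rw [← Module.End.mul_apply, ← Module.End.mul_apply, ← map_mul, ← map_mul,
      ← LinearMap.add_apply, ← map_add, hAB, map_one, Module.End.one_apply]
  simp only [← hP1, ← hP2, hR]
  simp only [← hS]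
  refine ⟨?_, ?_, ?_⟩
  · intro t ht
    simp only [Set.mem_ofPred_eq] at ht ⊢
    rw [hcomm, ht]
  · intro t ht s hs hts
    simp only [Set.mem_ofPred_eq] at ht hs hts
    rw [← hone t, ← hone s, ht, hs, hts]
  · intro w hw
    simp only [Set.mem_ofPred_eq] at hw
    have h1 : E (S k) (E A w + E B (z * w)) = w := by
      rw [map_add, hcomm (S k) A, hcomm (S k) B, ← hw, hone]
    refine ⟨E A w + E B (z * w), ?_, h1⟩
    simp only [Set.mem_ofPred_eq]
    rw [h1, map_add, hcomm P A, hcomm P B, hw, hone]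
end

section
/- (Shifting lemma) Let L be a field of characteristic p, q a power of p, n ≥ 2, 1 ≤ k < n, and a, b nonnegative integers. Let u, s ∈ L with Tr_{n−k}(u) ≠ a and Tr_k(u) ≠ b, and suppose Tr_n(s) · (Tr_{n−k}(u) − a) = Tr_{n−k}(s) · (Tr_n(u) − (a + b)). Define s' := ( Tr_k(s) / (Tr_k(u) − b) )^q − Tr_k(s) / (Tr_k(u) − b). Then Tr_{n−k}(u)^{q^k} ≠ a and Tr_n(s') · (Tr_{n−k}(u)^{q^k} − a) = Tr_{n−k}(s') · (Tr_n(u) − (a + b)). -/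
theorem Tr_split {R : Type*} [CommRing R] (q m k : ℕ) (F : ℕ → R →+* R)
    (hF : ∀ j x, F j x = x ^ q ^ j) (x : R) :
    Tr q (m + k) x = Tr q m x + F m (Tr q k x) := by
  unfold Tr
  rw [Finset.sum_range_add, map_sum]
  congr 1
  refine Finset.sum_congr rfl fun j _ => ?_
  rw [hF, ← pow_mul, ← pow_add, add_comm]

theorem Tr_tele {R : Type*} [CommRing R] (q m : ℕ) (F : ℕ → R →+* R)
    (hF : ∀ j x, F j x = x ^ q ^ j) (x : R) :
    Tr q m (x ^ q - x) = F m x - x := by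
  unfold Tr
  have h : ∀ j ∈ Finset.range m, (x ^ q - x) ^ q ^ j = F (j+1) x - F j x := by
    intro j _
    rw [← hF, map_sub, map_pow, hF, hF, ← pow_mul, pow_succ]
  rw [Finset.sum_congr rfl h, Finset.sum_range_sub (fun j => F j x), hF 0]
  simp

/-- Shifting lemma: If `Tr_{n−k}(u) ≠ a`, `Tr_k(u) ≠ b` and
`Tr_n(s)·(Tr_{n−k}(u) − a) = Tr_{n−k}(s)·(Tr_n(u) − (a+b))`, then for
`s' := (Tr_k(s)/(Tr_k(u) − b))^q − Tr_k(s)/(Tr_k(u) − b)` one has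
`Tr_{n−k}(u)^{q^k} ≠ a` and `Tr_n(s')·(Tr_{n−k}(u)^{q^k} − a) = Tr_{n−k}(s')·(Tr_n(u) − (a+b))`. -/
theorem stmt_14 (p e q n k a b : ℕ) (hp : p.Prime) (he : 0 < e) (hq : q = p ^ e)
    (hn : 2 ≤ n) (hk1 : 1 ≤ k) (hkn : k < n)
    (L : Type*) [Field L] [CharP L p]
    (u s : L) (hua : Tr q (n - k) u ≠ (a : L)) (hub : Tr q k u ≠ (b : L))
    (hs : Tr q n s * (Tr q (n - k) u - (a : L))
          = Tr q (n - k) s * (Tr q n u - ((a : L) + (b : L))))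
    (s' : L)
    (hs' : s' = (Tr q k s / (Tr q k u - (b : L))) ^ q - Tr q k s / (Tr q k u - (b : L))) :
    (Tr q (n - k) u) ^ q ^ k ≠ (a : L) ∧
    Tr q n s' * ((Tr q (n - k) u) ^ q ^ k - (a : L))
      = Tr q (n - k) s' * (Tr q n u - ((a : L) + (b : L))) := by
  have : Fact p.Prime := ⟨hp⟩
  obtain ⟨m, rfl⟩ : ∃ m, n = m + k := ⟨n - k, by omega⟩
  rw [Nat.add_sub_cancel] at *
  let F : ℕ → L →+* L := fun j => iterateFrobenius L p (e * j)
  have hF : ∀ j x, F j x = x ^ q ^ j := by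
    intro j x
    simp only [F, iterateFrobenius_def, hq, ← pow_mul]
  have hA : Tr q m u - (a : L) ≠ 0 := sub_ne_zero.mpr hua
  have hB : Tr q k u - (b : L) ≠ 0 := sub_ne_zero.mpr hub
  have hFA : F k (Tr q m u - (a : L)) = Tr q m u ^ q ^ k - (a : L) := by
    rw [map_sub, map_natCast, hF]
  have hU1 : Tr q (m + k) u - ((a : L) + b)
      = (Tr q m u - a) + F m (Tr q k u - b) := by
    rw [Tr_split q m k F hF, map_sub, map_natCast]; ring
  have hU2 : Tr q (m + k) u - ((a : L) + b)
      = (Tr q k u - b) + F k (Tr q m u - a) := by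
    rw [add_comm m k, Tr_split q k m F hF, map_sub, map_natCast]; ring
  have hS1 := Tr_split q m k F hF s
  have hS2 : Tr q (m + k) s = Tr q k s + F k (Tr q m s) := by
    rw [add_comm m k, Tr_split q k m F hF]
  have hFA0 : F k (Tr q m u - (a : L)) ≠ 0 := (map_ne_zero _).mpr hA
  have hFB0 : F m (Tr q k u - (b : L)) ≠ 0 := (map_ne_zero _).mpr hB
  refine ⟨sub_ne_zero.mp (hFA ▸ hFA0), ?_⟩
  have hw : F m (Tr q k s / (Tr q k u - b)) = Tr q m s / (Tr q m u - a) := by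
    rw [map_div₀, div_eq_div_iff hFB0 hA]
    rw [hS1, hU1] at hs
    linear_combination hs
  have hFF : ∀ x, F (m + k) x = F k (F m x) := by
    intro x
    rw [hF, hF, hF, ← pow_mul, ← pow_add]
  rw [hs', Tr_tele q _ F hF, Tr_tele q _ F hF, hFF, hw, ← hFA, map_div₀]
  have h1 : Tr q m s / (Tr q m u - a) * (Tr q (m + k) u - ((a : L) + b))
      = Tr q k s + F k (Tr q m s) := by
    rw [← hS2, div_mul_eq_mul_div, ← hs, mul_div_cancel_right₀ _ hA]
  have h2 : Tr q k s / (Tr q k u - b) * (Tr q k u - (b : L)) = Tr q k s :=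
    div_mul_cancel₀ _ hB
  have h3 := div_mul_cancel₀ (F k (Tr q m s)) hFA0
  rw [sub_mul, sub_mul, h1, h3, hU2, mul_add, h2]
  ring
end

section
/- Let q be a prime power, n ≥ 2 and 1 ≤ k < n. Let K = F_{q^n}(z) be the rational function field and f(T) = −z^{−1}·Tr_{n−k}(T) + Tr_k(T)^{q^{n−k}} ∈ K[T]. Let M be the splitting field of f over K. Then M/K is a Galois extension and there exists an injective group homomorphism from Gal(M/K) into GL_{n−1}(F_q), the group of invertible (n−1)×(n−1) matrices over F_q. -/
theorem aux_main {K M Fq : Type*} [Field K] [Field M] [Algebra K M] [Field Fq] [Fintype Fq]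
    (p e q n k : ℕ) (hp : p.Prime) (he : 0 < e) (hq : q = p ^ e)
    (hk1 : 1 ≤ k) (hkn : k < n) (hFq : Fintype.card Fq = q) [CharP K p]
    (i : Fq →+* K) (c : K) (hc : c ≠ 0)
    (f : Polynomial K)
    (hf : f = -(Polynomial.C c)
                * (∑ j ∈ Finset.range (n - k), Polynomial.X ^ q ^ j)
              + (∑ j ∈ Finset.range k, Polynomial.X ^ q ^ j) ^ q ^ (n - k))
    [f.IsSplittingField K M] :
    IsGalois K M ∧
    ∃ φ : (M ≃ₐ[K] M) →* Matrix.GeneralLinearGroup (Fin (n - 1)) Fq,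
      Function.Injective φ := by
  classical
  have : Fact p.Prime := ⟨hp⟩
  have hq1 : 1 < q := hq ▸ Nat.one_lt_pow he.ne' hp.one_lt
  have hqK : (q : K) = 0 := by
    rw [hq, Nat.cast_pow, CharP.cast_eq_zero, zero_pow he.ne']
  have hder : f.derivative = Polynomial.C (-c) := by
    have h1 : ∀ m : ℕ, 1 ≤ m →
        (∑ j ∈ Finset.range m, (Polynomial.X : Polynomial K) ^ q ^ j).derivative = 1 := by
      intro m hm
      obtain ⟨m, rfl⟩ := Nat.exists_eq_add_of_le' hm
      rw [Finset.sum_range_succ']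
      simp [Polynomial.derivative_X_pow, hqK]
    have hnk : n - k ≠ 0 := by omega
    rw [hf, ← Polynomial.C_neg]
    simp only [Polynomial.derivative_add, Polynomial.derivative_C_mul, h1 (n-k) (by omega),
      Polynomial.derivative_pow]
    simp [hqK, hnk]
  have hsep : f.Separable := by
    rw [Polynomial.Separable, hder]
    refine ⟨0, Polynomial.C (-c)⁻¹, ?_⟩
    rw [zero_mul, zero_add, ← Polynomial.C_mul, inv_mul_cancel₀ (neg_ne_zero.mpr hc),
      Polynomial.C_1]
  have hTdeg : ∀ m : ℕ,
      (∑ j ∈ Finset.range (m + 1), (Polynomial.X : Polynomial K) ^ q ^ j).degree = (q ^ m : ℕ) := by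
    intro m
    induction m with
    | zero => simp
    | succ m ih =>
      rw [Finset.sum_range_succ, Polynomial.degree_add_eq_right_of_degree_lt, Polynomial.degree_X_pow]
      rw [ih, Polynomial.degree_X_pow]
      exact_mod_cast Nat.pow_lt_pow_right hq1 (Nat.lt_succ_self m)
  have hdeg : f.natDegree = q ^ (n - 1) := by
    obtain ⟨k, rfl⟩ := Nat.exists_eq_add_of_le' hk1
    obtain ⟨m, rfl⟩ := Nat.exists_eq_add_of_lt hkn
    have e1 : k + 1 + m + 1 - (k + 1) = m + 1 := by omega
    have e2 : k + 1 + m + 1 - 1 = k + (m + 1) := by omega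
    rw [e1] at hf
    rw [e2]
    apply Polynomial.natDegree_eq_of_degree_eq_some
    have h2 : ((∑ j ∈ Finset.range (k+1), (Polynomial.X : Polynomial K) ^ q ^ j) ^ q ^ (m+1)).degree
        = ((q ^ (k + (m + 1)) : ℕ) : WithBot ℕ) := by
      rw [Polynomial.degree_pow, hTdeg, nsmul_eq_mul, ← Nat.cast_mul, mul_comm, ← pow_add]
    rw [hf, Polynomial.degree_add_eq_right_of_degree_lt, h2]
    rw [h2, ← Polynomial.C_neg, Polynomial.degree_C_mul (neg_ne_zero.mpr hc), hTdeg]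
    exact_mod_cast Nat.pow_lt_pow_right hq1 (by omega)
  have hgal : IsGalois K M := IsGalois.of_separable_splitting_field (p := f) hsep
  refine ⟨hgal, ?_⟩
  have hf0 : f ≠ 0 := hsep.ne_zero
  have hcard : Fintype.card (f.rootSet M) = q ^ (n - 1) := by
    rw [← hdeg]
    exact Polynomial.card_rootSet_eq_natDegree hsep (Polynomial.IsSplittingField.splits M f)
  letI : Algebra Fq M := ((algebraMap K M).comp i).toAlgebra
  have hsm : ∀ (a : Fq) (x : M), a • x = algebraMap K M (i a) * x := fun a x => by
    rw [Algebra.smul_def]; rfl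
  haveI : CharP M p := charP_of_injective_algebraMap (algebraMap K M).injective p
  have hev : ∀ x : M, Polynomial.aeval x f = -(algebraMap K M c) *
      (∑ j ∈ Finset.range (n - k), x ^ q ^ j) + (∑ j ∈ Finset.range k, x ^ q ^ j) ^ q ^ (n - k) := by
    intro x
    rw [hf]; simp
  have hadd : ∀ (x y : M) (j : ℕ), (x + y) ^ q ^ j = x ^ q ^ j + y ^ q ^ j := by
    intro x y j
    rw [hq, ← pow_mul, add_pow_char_pow]
  have hcq : ∀ (a : Fq) (j : ℕ), a ^ q ^ j = a := by
    intro a j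
    rw [← hFq, FiniteField.pow_card_pow]
  have hsmul : ∀ (a : Fq) (x : M) (j : ℕ), (a • x) ^ q ^ j = a • x ^ q ^ j := by
    intro a x j
    rw [smul_pow, hcq]
  let V : Submodule Fq M :=
    { carrier := {x | Polynomial.aeval x f = 0}
      add_mem' := by
        intro x y hx hy
        simp only [Set.mem_setOf_eq] at *
        rw [hev] at *
        simp only [hadd, Finset.sum_add_distrib]
        linear_combination hx + hy
      zero_mem' := by
        simp only [Set.mem_setOf_eq]
        rw [hev]
        have : q ≠ 0 := by omega
        simp [this]
      smul_mem' := by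
        intro a x hx
        simp only [Set.mem_setOf_eq] at *
        rw [hev] at *
        simp only [hsmul, ← Finset.smul_sum]
        rw [mul_smul_comm, ← smul_add, hx, smul_zero] }
  have hVmem : ∀ x : M, x ∈ V ↔ Polynomial.aeval x f = 0 := fun x => Iff.rfl
  have hVr : (V : Set M) = f.rootSet M := by
    ext x
    rw [Polynomial.mem_rootSet]
    simp [hVmem, hf0]
  have hVcard : Nat.card V = q ^ (n - 1) := by
    rw [← hcard, ← Nat.card_eq_fintype_card]
    exact congrArg (fun s : Set M => Nat.card s) hVr
  haveI : Finite V := Nat.finite_of_card_ne_zero (by rw [hVcard]; positivity)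
  have hfr : Module.finrank Fq V = n - 1 := by
    have := Module.natCard_eq_pow_finrank (K := Fq) (V := V)
    rw [hVcard, Nat.card_eq_fintype_card, hFq] at this
    exact (Nat.pow_right_injective hq1 this).symm
  let b : Module.Basis (Fin (n - 1)) Fq V := Module.finBasisOfFinrankEq Fq V hfr
  let ρ : (M ≃ₐ[K] M) →* Module.End Fq V :=
    { toFun := fun σ =>
        { toFun := fun v => ⟨σ v.1, by
            have hv := (hVmem _).1 v.2
            have h5 := Polynomial.aeval_algHom_apply (σ : M →ₐ[K] M) v.1 f
            rw [hv, map_zero] at h5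
            exact (hVmem _).2 h5⟩
          map_add' := fun v w => by ext; simp
          map_smul' := fun a v => by ext; simp [hsm] }
      map_one' := by ext; rfl
      map_mul' := fun σ τ => by ext; rfl }
  refine ⟨(((LinearMap.toMatrixAlgEquiv b : _ ≃ₐ[Fq] _) : Module.End Fq V →* _).comp ρ).toHomUnits, ?_⟩
  intro σ τ h
  have h1 : LinearMap.toMatrixAlgEquiv b (ρ σ) = LinearMap.toMatrixAlgEquiv b (ρ τ) :=
    congrArg Units.val h
  have h2 : ρ σ = ρ τ := (LinearMap.toMatrixAlgEquiv b).injective h1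
  have h3 : ∀ x ∈ f.rootSet M, σ x = τ x := by
    intro x hx
    rw [← hVr] at hx
    exact congrArg Subtype.val (LinearMap.congr_fun h2 ⟨x, hx⟩)
  have h4 : (σ : M →ₐ[K] M) = τ :=
    AlgHom.ext_of_adjoin_eq_top (Polynomial.IsSplittingField.adjoin_rootSet M f) h3
  exact AlgEquiv.ext fun x => DFunLike.congr_fun h4 x

theorem aux_embed (p e q n : ℕ) (hp : p.Prime) (he : 0 < e) (hq : q = p ^ e) (hn : 2 ≤ n)
    (Fq : Type*) [Field Fq] [Fintype Fq] (hFq : Fintype.card Fq = q)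
    (F : Type*) [Field F] [Fintype F] (hF : Fintype.card F = q ^ n) :
    CharP F p ∧ Nonempty (Fq →+* F) := by
  have : Fact p.Prime := ⟨hp⟩
  haveI c1 : CharP Fq p := charP_of_card_eq_prime_pow (f := e) (by rw [hFq, hq])
  haveI c2 : CharP F p := charP_of_card_eq_prime_pow (f := e * n) (by rw [hF, hq, pow_mul])
  refine ⟨c2, ?_⟩
  letI := ZMod.algebra Fq p
  letI := ZMod.algebra F p
  have h1 : Module.finrank (ZMod p) Fq = e := by
    have := Module.card_eq_pow_finrank (K := ZMod p) (V := Fq)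
    rw [hFq, hq, ZMod.card] at this
    exact (Nat.pow_right_injective hp.two_le this).symm
  have h2 : Module.finrank (ZMod p) F = e * n := by
    have := Module.card_eq_pow_finrank (K := ZMod p) (V := F)
    rw [hF, hq, ZMod.card, ← pow_mul] at this
    exact (Nat.pow_right_injective hp.two_le this).symm
  obtain ⟨g⟩ := FiniteField.nonempty_algHom_of_finrank_dvd (F := ZMod p) (K := Fq) (L := F)
    (by rw [h1, h2]; exact dvd_mul_right _ _)
  exact ⟨g.toRingHom⟩


set_option synthInstance.maxHeartbeats 1000000

/-- Let `K = F_{q^n}(z)` and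
`f(T) = −z^{−1}·Tr_{n−k}(T) + Tr_k(T)^{q^{n−k}} ∈ K[T]`, and let `M` be the splitting
field of `f` over `K`. Then `M/K` is Galois and `Gal(M/K)` embeds into
`GL_{n−1}(F_q)`. -/
theorem stmt_16 (p e q n k : ℕ) (hp : p.Prime) (he : 0 < e) (hq : q = p ^ e)
    (hn : 2 ≤ n) (hk1 : 1 ≤ k) (hkn : k < n)
    (Fq : Type*) [Field Fq] [Fintype Fq] (hFq : Fintype.card Fq = q)
    (F : Type*) [Field F] [Fintype F] (hF : Fintype.card F = q ^ n)
    (f : Polynomial (RatFunc F))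
    (hf : f = -(Polynomial.C (RatFunc.X : RatFunc F)⁻¹)
                * (∑ j ∈ Finset.range (n - k), Polynomial.X ^ q ^ j)
              + (∑ j ∈ Finset.range k, Polynomial.X ^ q ^ j) ^ q ^ (n - k)) :
    IsGalois (RatFunc F) f.SplittingField ∧
    ∃ φ : (f.SplittingField ≃ₐ[RatFunc F] f.SplittingField)
            →* Matrix.GeneralLinearGroup (Fin (n - 1)) Fq,
      Function.Injective φ := by
  obtain ⟨hc, ⟨i⟩⟩ := aux_embed p e q n hp he hq hn Fq hFq F hF
  haveI : CharP (RatFunc F) p :=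
    charP_of_injective_algebraMap (algebraMap F (RatFunc F)).injective p
  exact aux_main (M := f.SplittingField) p e q n k hp he hq hk1 hkn hFq
    ((algebraMap F (RatFunc F)).comp i) _ (inv_ne_zero RatFunc.X_ne_zero) f hf
end

section
/- Let q be a prime power, n ≥ 2 and 1 ≤ k < n. Let K = F_{q^n}(z) be the rational function field and Ω an algebraic closure of K. Then the polynomial g(T) = Tr_{n−k}(T)^{q^k} − z·Tr_k(T) ∈ K[T] is separable of degree q^{n−1}, and its set of roots in Ω is an F_q-subspace of Ω: it contains 0, is closed under addition and under multiplication by scalars from F_q, and has exactly q^{n−1} elements. -/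
open Polynomial in
theorem aux_deg {K : Type*} [Field K] (q : ℕ) (hq : 1 < q) (m : ℕ) :
    (∑ j ∈ Finset.range (m + 1), (X : K[X]) ^ q ^ j).natDegree = q ^ m := by
  induction m with
  | zero => simp
  | succ m ih =>
    rw [Finset.sum_range_succ, natDegree_add_eq_right_of_natDegree_lt, natDegree_X_pow]
    rw [ih, natDegree_X_pow]
    exact Nat.pow_lt_pow_right hq (Nat.lt_succ_self m)

open Polynomial in
theorem aux_der {K : Type*} [Field K] (q : ℕ) (h0 : (q : K) = 0) (m : ℕ) :
    derivative (∑ j ∈ Finset.range (m + 1), (X : K[X]) ^ q ^ j) = 1 := by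
  have h0' : (q : K[X]) = 0 := by rw [← C_eq_natCast, h0, C_0]
  rw [Finset.sum_range_succ']
  simp [derivative_X_pow, h0]

/-- Over `K = F_{q^n}(z)` with algebraic closure `Ω`, the polynomial
`g(T) = Tr_{n−k}(T)^{q^k} − z·Tr_k(T)` is separable of degree `q^{n−1}`, and its set of
roots in `Ω` contains `0`, is closed under addition and under multiplication by the
elements of the copy of `F_q` inside `Ω` (the elements `c` with `c^q = c`), and has
exactly `q^{n−1}` elements. -/
theorem stmt_17 (p e q n k : ℕ) (hp : p.Prime) (he : 0 < e) (hq : q = p ^ e)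
    (hn : 2 ≤ n) (hk1 : 1 ≤ k) (hkn : k < n)
    (F : Type*) [Field F] [Fintype F] (hF : Fintype.card F = q ^ n)
    (Ω : Type*) [Field Ω] [Algebra (RatFunc F) Ω] [IsAlgClosure (RatFunc F) Ω]
    (g : Polynomial (RatFunc F))
    (hg : g = (∑ j ∈ Finset.range (n - k), Polynomial.X ^ q ^ j) ^ q ^ k
              - Polynomial.C (RatFunc.X : RatFunc F)
                  * (∑ j ∈ Finset.range k, Polynomial.X ^ q ^ j))
    (S : Set Ω) (hS : S = {t : Ω | Polynomial.aeval t g = 0}) :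
    g.Separable ∧ g.natDegree = q ^ (n - 1) ∧
    (0 : Ω) ∈ S ∧
    (∀ s ∈ S, ∀ t ∈ S, s + t ∈ S) ∧
    (∀ c : Ω, c ^ q = c → ∀ t ∈ S, c * t ∈ S) ∧
    S.ncard = q ^ (n - 1) := by
  classical
  have hq1 : 1 < q := by rw [hq]; exact Nat.one_lt_pow he.ne' hp.one_lt
  have : Fact p.Prime := ⟨hp⟩
  have hcF : CharP F p := by
    apply charP_of_card_eq_prime_pow (f := e * n)
    rw [hF, hq, pow_mul]
  have hcK : CharP (RatFunc F) p := charP_of_injective_algebraMap (algebraMap F (RatFunc F)).injective p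
  have hcΩ : CharP Ω p := charP_of_injective_algebraMap (algebraMap (RatFunc F) Ω).injective p
  have h0 : (q : RatFunc F) = 0 := by
    rw [hq, Nat.cast_pow, CharP.cast_eq_zero, zero_pow he.ne']
  obtain ⟨k, rfl⟩ : ∃ k', k = k' + 1 := ⟨k - 1, by omega⟩
  obtain ⟨m, rfl⟩ : ∃ m, n = k + 1 + (m + 1) := ⟨n - k - 2, by omega⟩
  have hsub : k + 1 + (m + 1) - (k + 1) = m + 1 := by omega
  have hsub1 : k + 1 + (m + 1) - 1 = m + (k + 1) := by omega
  rw [hsub] at hg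
  rw [hsub1]
  have hder : Polynomial.derivative g = - Polynomial.C (RatFunc.X : RatFunc F) := by
    rw [hg, Polynomial.derivative_sub, Polynomial.derivative_C_mul, aux_der q h0,
      Polynomial.derivative_pow]
    simp [h0]
  have hsep : g.Separable := by
    rw [Polynomial.separable_def, hder]
    apply IsCoprime.neg_right
    have hu : IsUnit (RatFunc.X : RatFunc F) := isUnit_iff_ne_zero.2 RatFunc.X_ne_zero
    obtain ⟨b, hb⟩ := (Polynomial.isUnit_C.2 hu).exists_left_inv
    exact ⟨0, b, by rw [hb]; simp⟩
  have hdeg : g.natDegree = q ^ (m + (k + 1)) := by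
    have h1 : ((∑ j ∈ Finset.range (m + 1), (Polynomial.X : Polynomial (RatFunc F)) ^ q ^ j)
        ^ q ^ (k + 1)).natDegree = q ^ (m + (k + 1)) := by
      rw [Polynomial.natDegree_pow, aux_deg q hq1, ← pow_add, add_comm]
    rw [hg, Polynomial.natDegree_sub_eq_left_of_natDegree_lt, h1]
    rw [h1, Polynomial.natDegree_C_mul RatFunc.X_ne_zero, aux_deg q hq1]
    exact Nat.pow_lt_pow_right hq1 (by omega)
  have hadd : ∀ (j : ℕ) (s t : Ω), (s + t) ^ q ^ j = s ^ q ^ j + t ^ q ^ j := by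
    intro j s t
    rw [hq, ← pow_mul]
    exact add_pow_char_pow ..
  have hev : ∀ t : Ω, Polynomial.aeval t g = (∑ j ∈ Finset.range (m + 1), t ^ q ^ j) ^ q ^ (k + 1)
      - algebraMap (RatFunc F) Ω RatFunc.X * ∑ j ∈ Finset.range (k + 1), t ^ q ^ j := by
    intro t
    rw [hg]
    simp
  have hg0 : g ≠ 0 := hsep.ne_zero
  have hSr : S = g.rootSet Ω := by
    rw [hS]; ext t
    simp [Polynomial.mem_rootSet, hg0]
  refine ⟨hsep, hdeg, ?_, ?_, ?_, ?_⟩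
  · rw [hS, Set.mem_ofPred_eq, hev]
    have hz : ∀ j, (0 : Ω) ^ q ^ j = 0 := fun j => zero_pow (pow_pos (by omega) j).ne'
    simp only [hz, Finset.sum_const_zero, mul_zero, sub_zero]
  · intro s hs t ht
    rw [hS, Set.mem_ofPred_eq, hev] at *
    simp only [hadd, Finset.sum_add_distrib]
    linear_combination hs + ht
  · intro c hc t ht
    have hcj : ∀ j, c ^ q ^ j = c := by
      intro j
      induction j with
      | zero => simp
      | succ j ih => rw [pow_succ, pow_mul, ih, hc]
    rw [hS, Set.mem_ofPred_eq, hev] at *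
    simp only [mul_pow, hcj, ← Finset.mul_sum]
    linear_combination c * ht
  · have : IsAlgClosed Ω := IsAlgClosure.isAlgClosed (RatFunc F)
    rw [hSr, ← hdeg, ← Nat.card_coe_set_eq, Nat.card_eq_fintype_card]
    exact Polynomial.card_rootSet_eq_natDegree hsep (IsAlgClosed.splits _)
end
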